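/- Every nonzero finite-dimensional Zinbiel superalgebra Z = Z₀ ⊕ Z₁ over a field has a minimal ideal which is graded; moreover, there exists a nonzero homogeneous element e ∈ Z₀ ∪ Z₁ lying in the annihilator of Z, i.e. with e·Z = Z·e = 0. -/

import Mathlib

open Module Submodule

/-- A Zinbiel superalgebra over a field `K`: a `K`-vector space `Z` with a bilinear
multiplication and a direct sum decomposition `Z = Z₀ ⊕ Z₁` such that
`Zᵢ·Zⱼ ⊆ Z_{i+j (mod 2)}` and, for all homogeneous `x, y, z`,
`(x·y)·z = x·(y·z + (−1)^{|y||z|} z·y)`. -/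
structure ZinbielSuper (K : Type*) [Field K] (Z : Type*) [AddCommGroup Z] [Module K Z] where
  mul : Z →ₗ[K] Z →ₗ[K] Z
  Z0 : Submodule K Z
  Z1 : Submodule K Z
  compl : IsCompl Z0 Z1
  mul00 : ∀ x ∈ Z0, ∀ y ∈ Z0, mul x y ∈ Z0
  mul01 : ∀ x ∈ Z0, ∀ y ∈ Z1, mul x y ∈ Z1
  mul10 : ∀ x ∈ Z1, ∀ y ∈ Z0, mul x y ∈ Z1
  mul11 : ∀ x ∈ Z1, ∀ y ∈ Z1, mul x y ∈ Z0
  zinb_even : ∀ x y z : Z, (x ∈ Z0 ∨ x ∈ Z1) → (y ∈ Z0 ∨ y ∈ Z1) → (z ∈ Z0 ∨ z ∈ Z1) →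
    (y ∈ Z0 ∨ z ∈ Z0) → mul (mul x y) z = mul x (mul y z + mul z y)
  zinb_odd : ∀ x y z : Z, (x ∈ Z0 ∨ x ∈ Z1) → y ∈ Z1 → z ∈ Z1 →
    mul (mul x y) z = mul x (mul y z - mul z y)

variable {K : Type*} [Field K] {Z : Type*} [AddCommGroup Z] [Module K Z]

/-- The linear span of all products `a·b` with `a ∈ A`, `b ∈ B`. -/
def mulSub (mul : Z →ₗ[K] Z →ₗ[K] Z) (A B : Submodule K Z) : Submodule K Z :=
  Submodule.span K {z : Z | ∃ a ∈ A, ∃ b ∈ B, mul a b = z}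

/-- `I` is a (two-sided) ideal of the Zinbiel superalgebra: `Z·I ⊆ I` and `I·Z ⊆ I`. -/
def IsIdeal (S : ZinbielSuper K Z) (I : Submodule K Z) : Prop :=
  ∀ x : Z, ∀ a ∈ I, S.mul x a ∈ I ∧ S.mul a x ∈ I

/-- `I` is a right ideal of the Zinbiel superalgebra: `I·Z ⊆ I`. -/
def IsRightIdeal (S : ZinbielSuper K Z) (I : Submodule K Z) : Prop :=
  ∀ a ∈ I, ∀ x : Z, S.mul a x ∈ I

/-- `I` is a minimal ideal: it is a nonzero ideal and the only ideals contained in it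
are `0` and itself. -/
def IsMinimalIdeal (S : ZinbielSuper K Z) (I : Submodule K Z) : Prop :=
  IsIdeal S I ∧ I ≠ ⊥ ∧ ∀ J : Submodule K Z, IsIdeal S J → J ≤ I → J = ⊥ ∨ J = I

/-- `I` is a minimal right ideal: it is a nonzero right ideal and the only right ideals
contained in it are `0` and itself. -/
def IsMinimalRightIdeal (S : ZinbielSuper K Z) (I : Submodule K Z) : Prop :=
  IsRightIdeal S I ∧ I ≠ ⊥ ∧ ∀ J : Submodule K Z, IsRightIdeal S J → J ≤ I → J = ⊥ ∨ J = I

namespace ZinbielSuper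

variable (S : ZinbielSuper K Z)

def Hom (x : Z) : Prop := x ∈ S.Z0 ∨ x ∈ S.Z1

def Gr (J : Submodule K Z) : Prop := ∀ a ∈ S.Z0, ∀ b ∈ S.Z1, a + b ∈ J → a ∈ J ∧ b ∈ J

lemma decomp (x : Z) : ∃ a ∈ S.Z0, ∃ b ∈ S.Z1, a + b = x := by
  have h : x ∈ S.Z0 ⊔ S.Z1 := by rw [S.compl.sup_eq_top]; trivial
  exact Submodule.mem_sup.mp h

lemma hom_mul {x y : Z} (hx : S.Hom x) (hy : S.Hom y) : S.Hom (S.mul x y) := by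
  rcases hx with hx | hx <;> rcases hy with hy | hy
  · exact Or.inl (S.mul00 x hx y hy)
  · exact Or.inr (S.mul01 x hx y hy)
  · exact Or.inr (S.mul10 x hx y hy)
  · exact Or.inl (S.mul11 x hx y hy)

lemma even' {y z : Z} (hy : S.Hom y) (hz : S.Hom z) (h : y ∈ S.Z0 ∨ z ∈ S.Z0) (x : Z) :
    S.mul (S.mul x y) z = S.mul x (S.mul y z + S.mul z y) := by
  obtain ⟨a, ha, b, hb, rfl⟩ := S.decomp x
  have h1 := S.zinb_even a y z (Or.inl ha) hy hz h
  have h2 := S.zinb_even b y z (Or.inr hb) hy hz h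
  simp only [map_add, LinearMap.add_apply] at h1 h2 ⊢
  rw [h1, h2]; abel

lemma odd' {y z : Z} (hy : y ∈ S.Z1) (hz : z ∈ S.Z1) (x : Z) :
    S.mul (S.mul x y) z = S.mul x (S.mul y z - S.mul z y) := by
  obtain ⟨a, ha, b, hb, rfl⟩ := S.decomp x
  have h1 := S.zinb_odd a y z (Or.inl ha) hy hz
  have h2 := S.zinb_odd b y z (Or.inr hb) hy hz
  simp only [map_add, map_sub, LinearMap.add_apply] at h1 h2 ⊢
  rw [h1, h2]; abel

/-- The Zinbiel identity with an unspecified sign. -/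
lemma zin {y z : Z} (hy : S.Hom y) (hz : S.Hom z) :
    (∀ x, S.mul (S.mul x y) z = S.mul x (S.mul y z) + S.mul x (S.mul z y)) ∨
    (∀ x, S.mul (S.mul x y) z = S.mul x (S.mul y z) - S.mul x (S.mul z y)) := by
  by_cases h : y ∈ S.Z0 ∨ z ∈ S.Z0
  · left; intro x; rw [S.even' hy hz h, map_add]
  · push Not at h
    right; intro x
    rw [S.odd' (hy.resolve_left h.1) (hz.resolve_left h.2), map_sub]

lemma comm' {y z : Z} (hy : S.Hom y) (hz : S.Hom z) (x : Z) :
    S.mul (S.mul x y) z = S.mul (S.mul x z) y ∨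
    S.mul (S.mul x y) z = - S.mul (S.mul x z) y := by
  by_cases h : y ∈ S.Z0 ∨ z ∈ S.Z0
  · left; rw [S.even' hy hz h, S.even' hz hy h.symm, add_comm]
  · push Not at h
    right
    have h1 := hy.resolve_left h.1
    have h2 := hz.resolve_left h.2
    rw [S.odd' h1 h2, S.odd' h2 h1, ← map_neg, neg_sub]

lemma comm_mem {J : Submodule K Z} {y z : Z} (hy : S.Hom y) (hz : S.Hom z) {x : Z}
    (h : S.mul (S.mul x z) y ∈ J) : S.mul (S.mul x y) z ∈ J := by
  rcases S.comm' hy hz x with e | e <;> rw [e]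
  · exact h
  · exact J.neg_mem h

/-- Gradedness of the preimage of a graded subspace under left multiplication. -/
lemma gr_left {J : Submodule K Z} (hJ : S.Gr J) {n : Z} (hn : S.Hom n) :
    S.Gr (J.comap (S.mul n)) := by
  intro a ha b hb h
  simp only [Submodule.mem_comap, map_add] at h ⊢
  rcases hn with hn | hn
  · exact hJ _ (S.mul00 n hn a ha) _ (S.mul01 n hn b hb) h
  · rw [add_comm] at h
    exact (hJ _ (S.mul11 n hn b hb) _ (S.mul10 n hn a ha) h).symm

lemma gr_right {J : Submodule K Z} (hJ : S.Gr J) {n : Z} (hn : S.Hom n) :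
    S.Gr (J.comap (S.mul.flip n)) := by
  intro a ha b hb h
  simp only [Submodule.mem_comap, map_add, LinearMap.flip_apply] at h ⊢
  rcases hn with hn | hn
  · exact hJ _ (S.mul00 a ha n hn) _ (S.mul10 b hb n hn) h
  · rw [add_comm] at h
    exact (hJ _ (S.mul11 b hb n hn) _ (S.mul01 a ha n hn) h).symm

/-- Right multiplication by an even element which is idempotent vanishes. -/
lemma idem_zero {u : Z} (hu : u ∈ S.Z0) (h : ∀ x, S.mul (S.mul x u) u = S.mul x u) (x : Z) :
    S.mul x u = 0 := by
  have key : ∀ x, S.mul x u = S.mul x (S.mul u u) + S.mul x (S.mul u u) := by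
    intro x
    rw [← h x, S.even' (Or.inl hu) (Or.inl hu) (Or.inl hu), map_add]
  set v := S.mul u u with hv
  have hv0 : v ∈ S.Z0 := S.mul00 u hu u hu
  have e1 : S.mul v v + S.mul v v = v := by rw [← key v]; exact h u
  have e2 := S.even' (Or.inl hv0) (Or.inl hv0) (Or.inl hv0) v
  rw [e1] at e2
  have e3 : S.mul (S.mul v v) v + S.mul (S.mul v v) v = S.mul v v := by
    rw [← LinearMap.add_apply, ← map_add, e1]
  rw [e2, e1] at e3
  rw [← e3] at e1
  have e4 : v = 0 := by simpa using e1
  rw [key x, e4, map_zero, add_zero]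

lemma nilp_even [FiniteDimensional K Z] {y : Z} (hy : y ∈ S.Z0) :
    ∃ k, (S.mul.flip y : Module.End K Z) ^ k = 0 := by
  set f : Module.End K Z := S.mul.flip y with hf
  have hE : ∀ p : Polynomial K, ∃ u ∈ S.Z0,
      (S.mul.flip u : Module.End K Z) = f * Polynomial.aeval f p := by
    intro p
    induction p using Polynomial.induction_on with
    | C a => exact ⟨a • y, S.Z0.smul_mem a hy, by
        rw [map_smul, Polynomial.aeval_C, ← Algebra.commutes, ← Algebra.smul_def]⟩
    | add p q hp hq =>
      obtain ⟨u, hu, eu⟩ := hp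
      obtain ⟨w, hw, ew⟩ := hq
      exact ⟨u + w, S.Z0.add_mem hu hw, by rw [map_add, eu, ew, map_add, mul_add]⟩
    | monomial n a hp =>
      obtain ⟨u, hu, eu⟩ := hp
      refine ⟨S.mul y u + S.mul u y, S.Z0.add_mem (S.mul00 _ hy _ hu) (S.mul00 _ hu _ hy), ?_⟩
      rw [pow_succ, ← mul_assoc, map_mul, Polynomial.aeval_X, ← mul_assoc, ← eu]
      ext x
      rw [Module.End.mul_apply]
      exact (S.even' (Or.inl hy) (Or.inl hu) (Or.inl hy) x).symm
  have hint : IsIntegral K f := Algebra.IsIntegral.isIntegral f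
  obtain ⟨g, hg, hnd⟩ := Polynomial.exists_eq_pow_rootMultiplicity_mul_and_not_dvd
    (minpoly K f) (minpoly.ne_zero hint) 0
  rw [Polynomial.C_0, sub_zero] at hg hnd
  set n := Polynomial.rootMultiplicity 0 (minpoly K f)
  have hcop : IsCoprime (Polynomial.X ^ (n + 1)) g :=
    IsCoprime.pow_left ((Polynomial.irreducible_X.coprime_iff_not_dvd).2 hnd)
  obtain ⟨s, t, hst⟩ := hcop
  have hmin : f ^ n * Polynomial.aeval f g = 0 := by
    have := minpoly.aeval K f
    rw [hg] at this
    simpa using this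
  obtain ⟨u, hu, eu⟩ := hE (Polynomial.X ^ n * s)
  have h1 : f * Polynomial.aeval f (Polynomial.X ^ n * s) =
      Polynomial.aeval f (s * Polynomial.X ^ (n + 1)) := by
    rw [show s * Polynomial.X ^ (n + 1) = Polynomial.X * (Polynomial.X ^ n * s) by ring,
      map_mul _ Polynomial.X, Polynomial.aeval_X]
  rw [h1] at eu
  have h0 : Polynomial.aeval f (Polynomial.X ^ n * g) = 0 := by simpa using hmin
  have hid : (S.mul.flip u : Module.End K Z) * S.mul.flip u = S.mul.flip u := by
    rw [eu, ← map_mul, ← sub_eq_zero, ← map_sub]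
    have : s * Polynomial.X ^ (n + 1) * (s * Polynomial.X ^ (n + 1)) - s * Polynomial.X ^ (n + 1)
        = (Polynomial.X ^ n * g) * (- s * Polynomial.X * t) := by
      linear_combination (s * Polynomial.X ^ (n + 1)) * hst
    rw [this, map_mul, h0, zero_mul]
  have hz := S.idem_zero hu (fun x => LinearMap.congr_fun hid x)
  have hz' : (S.mul.flip u : Module.End K Z) = 0 := by
    ext x; exact hz x
  rw [eu] at hz'
  refine ⟨n, ?_⟩
  have : (Polynomial.X ^ n : Polynomial K) =
      (s * Polynomial.X ^ (n + 1)) * Polynomial.X ^ n + (Polynomial.X ^ n * g) * t := by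
    linear_combination (-Polynomial.X ^ n) * hst
  have h2 := congrArg (Polynomial.aeval f) this
  rw [map_add, map_mul, map_mul _ _ t, hz', h0, zero_mul, zero_mul, add_zero] at h2
  simpa using h2

lemma nilp [FiniteDimensional K Z] {y : Z} (hy : S.Hom y) :
    ∃ k, (S.mul.flip y : Module.End K Z) ^ k = 0 := by
  rcases hy with hy | hy
  · exact S.nilp_even hy
  · refine ⟨2, ?_⟩
    ext x
    rw [pow_two, Module.End.mul_apply]
    have := S.odd' hy hy x
    rw [sub_self, map_zero] at this
    exact this

lemma exists_right [FiniteDimensional K Z] {J : Submodule K Z} (hJ : S.Gr J)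
    (hI : IsIdeal S J) (hne : J ≠ ⊤) :
    ∃ n, S.Hom n ∧ n ∉ J ∧ ∀ z, S.mul n z ∈ J := by
  have hex : ∃ n, S.Hom n ∧ n ∉ J := by
    by_contra! hc
    apply hne
    rw [eq_top_iff]
    rintro x -
    obtain ⟨a, ha, b, hb, rfl⟩ := S.decomp x
    exact J.add_mem (hc a (Or.inl ha)) (hc b (Or.inr hb))
  let T : Set (Submodule K Z) := {W | ∃ n, S.Hom n ∧ n ∉ J ∧ W = J.comap (S.mul n)}
  have hT : T.Nonempty := by
    obtain ⟨n, h1, h2⟩ := hex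
    exact ⟨_, n, h1, h2, rfl⟩
  obtain ⟨W, ⟨n, hn, hnJ, rfl⟩, hmax⟩ :=
    (wellFounded_gt (α := Submodule K Z)).has_min T hT
  refine ⟨n, hn, hnJ, ?_⟩
  have main : ∀ y, S.Hom y → S.mul n y ∈ J := by
    intro y hy
    by_contra hny
    -- powers of right multiplication by y
    have hpow : ∀ k, S.Hom (((S.mul.flip y : Module.End K Z) ^ k) n) ∧
        J.comap (S.mul n) ≤ J.comap (S.mul (((S.mul.flip y : Module.End K Z) ^ k) n)) := by
      intro k
      induction k with
      | zero => exact ⟨hn, le_rfl⟩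
      | succ k ih =>
        rw [pow_succ', Module.End.mul_apply]
        set m := ((S.mul.flip y : Module.End K Z) ^ k) n
        change S.Hom (S.mul m y) ∧ _ ≤ J.comap (S.mul (S.mul m y))
        refine ⟨S.hom_mul ih.1 hy, ih.2.trans ?_⟩
        intro z hz
        obtain ⟨a, ha, b, hb, rfl⟩ := S.decomp z
        obtain ⟨h1, h2⟩ := S.gr_left hJ ih.1 a ha b hb hz
        rw [Submodule.mem_comap, map_add]
        exact J.add_mem (S.comm_mem hy (Or.inl ha) (hI _ _ h1).2)
          (S.comm_mem hy (Or.inr hb) (hI _ _ h2).2)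
    have hk : ∃ k, ((S.mul.flip y : Module.End K Z) ^ k) n ∈ J := by
      obtain ⟨k, hk⟩ := S.nilp hy
      exact ⟨k, by rw [hk]; exact J.zero_mem⟩
    classical
    obtain ⟨k, hk1, hk2⟩ : ∃ k, ((S.mul.flip y : Module.End K Z) ^ k) n ∉ J ∧
        ((S.mul.flip y : Module.End K Z) ^ (k + 1)) n ∈ J := by
      by_contra! hc
      obtain ⟨k, hk⟩ := hk
      have : ∀ k, ((S.mul.flip y : Module.End K Z) ^ k) n ∉ J := by
        intro k
        induction k with
        | zero => exact hnJ
        | succ k ih => exact hc k ih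
      exact this k hk
    refine hmax _ ⟨_, (hpow k).1, hk1, rfl⟩ (lt_of_le_of_ne (hpow k).2 ?_)
    intro heq
    apply hny
    have : y ∈ J.comap (S.mul (((S.mul.flip y : Module.End K Z) ^ k) n)) := by
      rw [pow_succ', Module.End.mul_apply] at hk2
      exact hk2
    rw [← heq] at this
    exact this
  intro z
  obtain ⟨a, ha, b, hb, rfl⟩ := S.decomp z
  rw [map_add]
  exact J.add_mem (main a (Or.inl ha)) (main b (Or.inr hb))

lemma exists_ann [FiniteDimensional K Z] (J : Submodule K Z) : S.Gr J → IsIdeal S J → J ≠ ⊤ →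
    ∃ e, S.Hom e ∧ e ∉ J ∧ ∀ z, S.mul e z ∈ J ∧ S.mul z e ∈ J := by
  induction J using (wellFounded_gt (α := Submodule K Z)).induction with
  | _ J ih =>
  intro hJ hI hne
  obtain ⟨n, hn, hnJ, hnz⟩ := S.exists_right hJ hI hne
  by_cases htop : J.comap (S.mul.flip n) = ⊤
  · refine ⟨n, hn, hnJ, fun z => ⟨hnz z, ?_⟩⟩
    have : z ∈ J.comap (S.mul.flip n) := by rw [htop]; trivial
    exact this
  have hlt : J < J.comap (S.mul.flip n) := by
    refine lt_of_le_of_ne (fun a ha => (hI n a ha).2) ?_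
    intro heq
    apply hnJ
    rw [heq]
    exact hnz n
  have hg := S.gr_right hJ hn
  -- right multiplication by n commutes with left multiplications modulo J
  have left : ∀ y z, S.Hom z → S.mul z n ∈ J → S.mul (S.mul y z) n ∈ J := by
    intro y z hz h
    rcases S.zin hz hn with e | e <;> rw [e]
    · exact J.add_mem (hI _ _ h).1 (hI _ _ (hnz z)).1
    · exact J.sub_mem (hI _ _ h).1 (hI _ _ (hnz z)).1
  have hid : IsIdeal S (J.comap (S.mul.flip n)) := by
    intro y z hz
    constructor
    · obtain ⟨a, ha, b, hb, rfl⟩ := S.decomp z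
      obtain ⟨h1, h2⟩ := hg a ha b hb hz
      rw [map_add]
      exact Submodule.add_mem _ (left y a (Or.inl ha) h1) (left y b (Or.inr hb) h2)
    · obtain ⟨a, ha, b, hb, rfl⟩ := S.decomp y
      rw [map_add]
      exact Submodule.add_mem _ (S.comm_mem (Or.inl ha) hn (hI _ _ hz).2)
        (S.comm_mem (Or.inr hb) hn (hI _ _ hz).2)
  obtain ⟨e, he, heJ, hez⟩ := ih _ hlt hg hid htop
  refine ⟨S.mul e n, S.hom_mul he hn, heJ, fun z => ⟨?_, ?_⟩⟩
  · obtain ⟨a, ha, b, hb, rfl⟩ := S.decomp z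
    rw [map_add]
    exact J.add_mem (S.comm_mem hn (Or.inl ha) (hez a).1) (S.comm_mem hn (Or.inr hb) (hez b).1)
  · have h1 : S.mul (S.mul z e) n ∈ J := (hez z).2
    have h2 : S.mul z (S.mul n e) ∈ J := (hI _ _ (hnz e)).1
    rcases S.zin he hn with eq | eq
    · rw [eq] at h1; exact (Submodule.add_mem_iff_left J h2).1 h1
    · rw [eq] at h1; exact (Submodule.sub_mem_iff_left J h2).1 h1

end ZinbielSuper

/-- Every nonzero finite-dimensional Zinbiel superalgebra has a graded minimal ideal,
and a nonzero homogeneous element in its annihilator. -/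
theorem exists_graded_minimal_ideal_and_homogeneous_ann (K : Type*) [Field K]
    (Z : Type*) [AddCommGroup Z] [Module K Z] [FiniteDimensional K Z] [Nontrivial Z]
    (S : ZinbielSuper K Z) :
    (∃ I : Submodule K Z, IsMinimalIdeal S I ∧ I = (I ⊓ S.Z0) ⊔ (I ⊓ S.Z1)) ∧
    (∃ e : Z, e ≠ 0 ∧ (e ∈ S.Z0 ∨ e ∈ S.Z1) ∧
      ∀ x : Z, S.mul e x = 0 ∧ S.mul x e = 0) := by
  have hgr : S.Gr (⊥ : Submodule K Z) := by
    intro a ha b hb h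
    rw [Submodule.mem_bot] at h
    have ha' : a ∈ S.Z1 := by
      rw [eq_neg_of_add_eq_zero_left h]; exact S.Z1.neg_mem hb
    have : a = 0 := Submodule.disjoint_def.1 S.compl.disjoint a ha ha'
    subst this
    rw [zero_add] at h
    subst h
    exact ⟨Submodule.zero_mem _, Submodule.zero_mem _⟩
  have hbot : IsIdeal S (⊥ : Submodule K Z) := by
    intro x a ha
    rw [Submodule.mem_bot] at ha
    subst ha
    simp
  obtain ⟨e, he, he0, hez⟩ := S.exists_ann ⊥ hgr hbot bot_ne_top
  simp only [Submodule.mem_bot] at he0 hez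
  refine ⟨⟨K ∙ e, ⟨?_, ?_, ?_⟩, ?_⟩, e, he0, he, hez⟩
  · intro x a ha
    obtain ⟨c, rfl⟩ := Submodule.mem_span_singleton.1 ha
    simp [(hez x).1, (hez x).2]
  · simpa using he0
  · intro J _ hJ
    exact (nonzero_span_atom e he0).le_iff.1 hJ
  · apply le_antisymm
    · rw [Submodule.span_singleton_le_iff_mem]
      have hm := Submodule.mem_span_singleton_self (R := K) e
      rcases he with h | h
      · exact Submodule.mem_sup_left ⟨hm, h⟩
      · exact Submodule.mem_sup_right ⟨hm, h⟩
    · exact sup_le inf_le_left inf_le_left
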